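/- arXiv:2005.10622 — 3 statements merged into one kernel-verified Lean document; each statement's English description precedes it below -/
import Mathlib

section
/- Let (X, 𝒜, μ) be a σ-finite measure space, let p_E, p_θ, p_α : X → [0,∞) be densities (measurable with ∫ p dμ = 1), let ω ∈ (0,1), and set p_ω := ω·p_θ + (1−ω)·p_α and D*(x) = p_ω(x)/(p_E(x)+p_ω(x)) on {p_E + p_ω > 0}. If D : X → (0,1) is measurable, V(D) = V(D*), and V(D*) is finite, then D = D* μ-almost everywhere on the set {x : p_E(x) + p_ω(x) > 0}, where V(D) := ∫ p_E·log(1−D) dμ + ω·∫ p_θ·log D dμ + (1−ω)·∫ p_α·log D dμ. -/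
/-!
STATEMENT 2 (Lemma 1 of Triple-GAIL, uniqueness of the optimal discriminator):
with the setup of Statement 1, if `D : X → (0,1)` is measurable and achieves
the same value of the objective as `D*`, and `V(D*)` is finite, then
`D = D*` μ-a.e. on the set `{x : p_E(x) + p_ω(x) > 0}`.

Since `D` takes values in `(0,1)` and the densities are nonnegative, every
integrand of `V` is nonpositive; hence `V(D)` is faithfully represented in the
extended reals as the negation (in `EReal`) of an `ℝ≥0∞`-valued lower integral
of the negated integrands; finiteness of `V(D*)` is `V(D*) ≠ ⊥`.
-/

open MeasureTheory
open scoped ENNReal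

noncomputable section

/-- The negation of the discriminator objective, valued in `ℝ≥0∞`
(all integrands below are nonnegative). -/
def negObj {X : Type*} [MeasurableSpace X] (μ : Measure X)
    (pE pθ pα : X → ℝ) (ω : ℝ) (D : X → ℝ) : ℝ≥0∞ :=
  (∫⁻ x, ENNReal.ofReal (pE x * (-Real.log (1 - D x))) ∂μ)
    + ENNReal.ofReal ω * (∫⁻ x, ENNReal.ofReal (pθ x * (-Real.log (D x))) ∂μ)
    + ENNReal.ofReal (1 - ω) * (∫⁻ x, ENNReal.ofReal (pα x * (-Real.log (D x))) ∂μ)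

/-- The discriminator objective
`V(D) = ∫ p_E·log(1−D) dμ + ω·∫ p_θ·log D dμ + (1−ω)·∫ p_α·log D dμ`,
valued in the extended reals. -/
def discObj {X : Type*} [MeasurableSpace X] (μ : Measure X)
    (pE pθ pα : X → ℝ) (ω : ℝ) (D : X → ℝ) : EReal :=
  -(negObj μ pE pθ pα ω D : EReal)

/-- The optimal discriminator `D* = p_ω/(p_E + p_ω)` where `p_E + p_ω > 0`,
and `1/2` elsewhere. -/
def Dstar {X : Type*} (pE pθ pα : X → ℝ) (ω : ℝ) : X → ℝ := fun x =>
  if 0 < pE x + (ω * pθ x + (1 - ω) * pα x) then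
    (ω * pθ x + (1 - ω) * pα x) / (pE x + (ω * pθ x + (1 - ω) * pα x))
  else 1 / 2

/-!
The negated objective is the integral of the binary cross-entropy of `D x` against the weights
`p_E x` and `p_ω x`. Normalising the weights to `1 - q` and `q`, Gibbs' inequality (from `log t <
t - 1` for `0 < t ≠ 1`) makes this integrand strictly minimal at `D x = q`, which is `D* x`. So
the integrand for `D` dominates the one for `D*`; when the integrals are equal and finite, the
integrands agree almost everywhere, and strictness forces `D x = D* x` wherever the weights do not
both vanish.
-/

/-- The binary cross-entropy `-(a * log (1 - d) + b * log d)` of a classifier output `d` against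
unnormalised class weights `a`, `b`: the pointwise integrand of the negated discriminator objective.
Because `Real.log 0 = 0`, the value is the intended one at `d = 0` only if `b = 0`, and at `d = 1`
only if `a = 0`. -/
def bceLoss (a b d : ℝ) : ℝ :=
  a * (-Real.log (1 - d)) + b * (-Real.log d)

/-- The density `p_ω = ω * p_θ + (1 - ω) * p_α` of the mixture of `p_θ` and `p_α`. -/
def mixtureDensity {X : Type*} (ω : ℝ) (pθ pα : X → ℝ) : X → ℝ := fun x =>
  ω * pθ x + (1 - ω) * pα x

section Pointwise

variable {a b d q s : ℝ}

-- Allowing `q = 0`, where `q * log q = 0`, covers points at which only one of the weights vanishes.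
theorem mul_log_sub_log_lt_sub (hq : 0 ≤ q) (hs : 0 < s) (hne : s ≠ q) :
    q * (Real.log s - Real.log q) < s - q := by
  rcases hq.eq_or_lt with rfl | hq
  · simpa using hs
  have hratio : s / q ≠ 1 := fun h => hne ((div_eq_one_iff_eq hq.ne').1 h)
  calc q * (Real.log s - Real.log q) = q * Real.log (s / q) := by
        rw [Real.log_div hs.ne' hq.ne']
    _ < q * (s / q - 1) :=
        mul_lt_mul_of_pos_left (Real.log_lt_sub_one_of_pos (div_pos hs hq) hratio) hq
    _ = s - q := by field_simp

theorem bceLoss_nonneg (ha : 0 ≤ a) (hb : 0 ≤ b) (hd : d ∈ Set.Icc (0 : ℝ) 1) :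
    0 ≤ bceLoss a b d :=
  add_nonneg
    (mul_nonneg ha (neg_nonneg.2 (Real.log_nonpos (sub_nonneg.2 hd.2) (sub_le_self 1 hd.1))))
    (mul_nonneg hb (neg_nonneg.2 (Real.log_nonpos hd.1 hd.2)))

theorem bceLoss_mul (c a b d : ℝ) : bceLoss (c * a) (c * b) d = c * bceLoss a b d := by
  unfold bceLoss
  ring

theorem bceLoss_one_sub_self_lt (hq : q ∈ Set.Icc (0 : ℝ) 1) (hd : d ∈ Set.Ioo (0 : ℝ) 1)
    (hne : d ≠ q) : bceLoss (1 - q) q q < bceLoss (1 - q) q d := by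
  have hpos : q * (Real.log d - Real.log q) < d - q := mul_log_sub_log_lt_sub hq.1 hd.1 hne
  have hneg : (1 - q) * (Real.log (1 - d) - Real.log (1 - q)) < (1 - d) - (1 - q) :=
    mul_log_sub_log_lt_sub (sub_nonneg.2 hq.2) (sub_pos.2 hd.2) (sub_right_injective.ne hne)
  unfold bceLoss
  linarith

theorem div_add_mem_Icc (ha : 0 ≤ a) (hb : 0 ≤ b) : b / (a + b) ∈ Set.Icc (0 : ℝ) 1 :=
  ⟨by positivity, div_le_one_of_le₀ (le_add_of_nonneg_left ha) (add_nonneg ha hb)⟩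

theorem bceLoss_div_add_lt (ha : 0 ≤ a) (hb : 0 ≤ b) (hab : 0 < a + b)
    (hd : d ∈ Set.Ioo (0 : ℝ) 1) (hne : d ≠ b / (a + b)) :
    bceLoss a b (b / (a + b)) < bceLoss a b d := by
  have hnorm (t : ℝ) :
      bceLoss a b t = (a + b) * bceLoss (1 - b / (a + b)) (b / (a + b)) t := by
    rw [← bceLoss_mul]
    congr 1 <;> field_simp
    ring
  rw [hnorm, hnorm d]
  exact mul_lt_mul_of_pos_left (bceLoss_one_sub_self_lt (div_add_mem_Icc ha hb) hd hne) hab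

end Pointwise

section OptimalDiscriminator

variable {X : Type*} {pE pθ pα : X → ℝ} {ω : ℝ} {x : X}

theorem mixtureDensity_nonneg (hω : ω ∈ Set.Icc (0 : ℝ) 1) (hθ : 0 ≤ pθ x)
    (hα : 0 ≤ pα x) : 0 ≤ mixtureDensity ω pθ pα x :=
  add_nonneg (mul_nonneg hω.1 hθ) (mul_nonneg (sub_nonneg.2 hω.2) hα)

theorem Dstar_of_pos (hx : 0 < pE x + mixtureDensity ω pθ pα x) :
    Dstar pE pθ pα ω x =
      mixtureDensity ω pθ pα x / (pE x + mixtureDensity ω pθ pα x) :=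
  if_pos hx

theorem Dstar_mem_Icc (hE : 0 ≤ pE x) (hmix : 0 ≤ mixtureDensity ω pθ pα x) :
    Dstar pE pθ pα ω x ∈ Set.Icc (0 : ℝ) 1 := by
  by_cases hx : 0 < pE x + mixtureDensity ω pθ pα x
  · rw [Dstar_of_pos hx]
    exact div_add_mem_Icc hE hmix
  · rw [show Dstar pE pθ pα ω x = 1 / 2 from if_neg hx]
    norm_num

end OptimalDiscriminator

section Integrated

variable {X : Type*} [MeasurableSpace X] {μ : Measure X}

@[fun_prop]
theorem aemeasurable_bceLoss {a b D : X → ℝ} (ha : AEMeasurable a μ) (hb : AEMeasurable b μ)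
    (hD : AEMeasurable D μ) : AEMeasurable (fun x => bceLoss (a x) (b x) (D x)) μ := by
  unfold bceLoss
  fun_prop

theorem ae_eq_of_lintegral_bceLoss_le {a b D D' : X → ℝ}
    (ham : AEMeasurable a μ) (hbm : AEMeasurable b μ) (hDm : AEMeasurable D μ)
    (ha : 0 ≤ᵐ[μ] a) (hb : 0 ≤ᵐ[μ] b) (hD : ∀ᵐ x ∂μ, D x ∈ Set.Ioo (0 : ℝ) 1)
    (hD' : ∀ᵐ x ∂μ, 0 < a x + b x → D' x = b x / (a x + b x))
    (hfin : ∫⁻ x, ENNReal.ofReal (bceLoss (a x) (b x) (D' x)) ∂μ ≠ ∞)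
    (hle : ∫⁻ x, ENNReal.ofReal (bceLoss (a x) (b x) (D x)) ∂μ ≤
      ∫⁻ x, ENNReal.ofReal (bceLoss (a x) (b x) (D' x)) ∂μ) :
    ∀ᵐ x ∂μ, 0 < a x + b x → D x = D' x := by
  have hlt : ∀ᵐ x ∂μ, 0 < a x + b x → D x ≠ D' x →
      ENNReal.ofReal (bceLoss (a x) (b x) (D' x)) <
        ENNReal.ofReal (bceLoss (a x) (b x) (D x)) := by
    filter_upwards [ha, hb, hD, hD'] with x hax hbx hDx hD'x hpos hne
    rw [hD'x hpos] at hne ⊢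
    exact (ENNReal.ofReal_lt_ofReal_iff_of_nonneg
      (bceLoss_nonneg hax hbx (div_add_mem_Icc hax hbx))).2
      (bceLoss_div_add_lt hax hbx hpos hDx hne)
  have hmin : ∀ᵐ x ∂μ, ENNReal.ofReal (bceLoss (a x) (b x) (D' x)) ≤
      ENNReal.ofReal (bceLoss (a x) (b x) (D x)) := by
    filter_upwards [ha, hb, hlt] with x hax hbx hltx
    rcases (add_nonneg hax hbx).eq_or_lt with hzero | hpos
    · obtain ⟨hax0, hbx0⟩ := (add_eq_zero_iff_of_nonneg hax hbx).1 hzero.symm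
      simp [bceLoss, hax0, hbx0]
    · by_cases heq : D x = D' x
      · rw [heq]
      · exact (hltx hpos heq).le
  filter_upwards [hlt, ae_eq_of_ae_le_of_lintegral_le hmin hfin (by fun_prop) hle]
    with x hltx heqx hpos
  by_contra hne
  exact (hltx hpos hne).ne heqx

variable {pE pθ pα D : X → ℝ} {ω : ℝ}

theorem aemeasurable_mixtureDensity (hθ : AEMeasurable pθ μ) (hα : AEMeasurable pα μ) :
    AEMeasurable (mixtureDensity ω pθ pα) μ := by
  unfold mixtureDensity
  fun_prop

theorem aemeasurable_Dstar (hE : AEMeasurable pE μ) (hθ : AEMeasurable pθ μ)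
    (hα : AEMeasurable pα μ) : AEMeasurable (Dstar pE pθ pα ω) μ := by
  have hratio : Measurable fun w : ℝ × ℝ =>
      if 0 < w.1 + w.2 then w.2 / (w.1 + w.2) else 1 / 2 :=
    Measurable.ite (measurableSet_lt measurable_const (by fun_prop)) (by fun_prop)
      measurable_const
  exact hratio.comp_aemeasurable (hE.prodMk (aemeasurable_mixtureDensity hθ hα))

theorem negObj_eq_lintegral_bceLoss
    (hEm : AEMeasurable pE μ) (hθm : AEMeasurable pθ μ) (hαm : AEMeasurable pα μ)
    (hE : 0 ≤ᵐ[μ] pE) (hθ : 0 ≤ᵐ[μ] pθ) (hα : 0 ≤ᵐ[μ] pα) (hω : ω ∈ Set.Icc (0 : ℝ) 1)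
    (hDm : AEMeasurable D μ) (hD : ∀ᵐ x ∂μ, D x ∈ Set.Icc (0 : ℝ) 1) :
    negObj μ pE pθ pα ω D =
      ∫⁻ x, ENNReal.ofReal (bceLoss (pE x) (mixtureDensity ω pθ pα x) (D x)) ∂μ := by
  have hω' : 0 ≤ 1 - ω := sub_nonneg.2 hω.2
  unfold negObj
  rw [← lintegral_const_mul'' _ (by fun_prop), ← lintegral_const_mul'' _ (by fun_prop),
    ← lintegral_add_left' (by fun_prop), ← lintegral_add_left' (by fun_prop)]
  refine lintegral_congr_ae ?_
  filter_upwards [hE, hθ, hα, hD] with x hEx hθx hαx hDx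
  have hlog : 0 ≤ -Real.log (D x) := neg_nonneg.2 (Real.log_nonpos hDx.1 hDx.2)
  have hlog' : 0 ≤ -Real.log (1 - D x) :=
    neg_nonneg.2 (Real.log_nonpos (sub_nonneg.2 hDx.2) (sub_le_self 1 hDx.1))
  have hEterm := mul_nonneg hEx hlog'
  have hθterm := mul_nonneg hω.1 (mul_nonneg hθx hlog)
  have hαterm := mul_nonneg hω' (mul_nonneg hαx hlog)
  rw [← ENNReal.ofReal_mul hω.1, ← ENNReal.ofReal_mul hω', ← ENNReal.ofReal_add hEterm hθterm,
    ← ENNReal.ofReal_add (add_nonneg hEterm hθterm) hαterm]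
  congr 1
  unfold bceLoss mixtureDensity
  ring

theorem discObj_le_discObj_iff {D' : X → ℝ} :
    discObj μ pE pθ pα ω D' ≤ discObj μ pE pθ pα ω D ↔
      negObj μ pE pθ pα ω D ≤ negObj μ pE pθ pα ω D' := by
  rw [discObj, discObj, EReal.neg_le_neg_iff, EReal.coe_ennreal_le_coe_ennreal_iff]

theorem discObj_ne_bot_iff :
    discObj μ pE pθ pα ω D ≠ ⊥ ↔ negObj μ pE pθ pα ω D ≠ ∞ := by
  simp [discObj]

end Integrated

theorem optimal_discriminator_unique_general
    {X : Type*} [MeasurableSpace X] {μ : Measure X} {pE pθ pα : X → ℝ}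
    (hEm : AEMeasurable pE μ) (hE : 0 ≤ᵐ[μ] pE)
    (hθm : AEMeasurable pθ μ) (hθ : 0 ≤ᵐ[μ] pθ)
    (hαm : AEMeasurable pα μ) (hα : 0 ≤ᵐ[μ] pα)
    {ω : ℝ} (hω : ω ∈ Set.Icc (0 : ℝ) 1)
    {D : X → ℝ} (hDm : AEMeasurable D μ) (hD : ∀ᵐ x ∂μ, D x ∈ Set.Ioo (0 : ℝ) 1)
    (hfin : discObj μ pE pθ pα ω (Dstar pE pθ pα ω) ≠ ⊥)
    (hle : discObj μ pE pθ pα ω (Dstar pE pθ pα ω) ≤ discObj μ pE pθ pα ω D) :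
    ∀ᵐ x ∂μ, 0 < pE x + (ω * pθ x + (1 - ω) * pα x) → D x = Dstar pE pθ pα ω x := by
  have hmix : 0 ≤ᵐ[μ] mixtureDensity ω pθ pα := by
    filter_upwards [hθ, hα] with x hθx hαx using mixtureDensity_nonneg hω hθx hαx
  have hDstar : ∀ᵐ x ∂μ, Dstar pE pθ pα ω x ∈ Set.Icc (0 : ℝ) 1 := by
    filter_upwards [hE, hmix] with x hEx hmixx using Dstar_mem_Icc hEx hmixx
  have hloss {F : X → ℝ} := negObj_eq_lintegral_bceLoss (D := F) hEm hθm hαm hE hθ hα hω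
  have hDstarm := aemeasurable_Dstar (ω := ω) hEm hθm hαm
  rw [discObj_ne_bot_iff, hloss hDstarm hDstar] at hfin
  rw [discObj_le_discObj_iff, hloss hDm (hD.mono fun _ h => Set.Ioo_subset_Icc_self h),
    hloss hDstarm hDstar] at hle
  exact ae_eq_of_lintegral_bceLoss_le hEm (aemeasurable_mixtureDensity hθm hαm) hDm hE hmix hD
    (.of_forall fun _ => Dstar_of_pos) hfin hle

theorem optimal_discriminator_unique
    {X : Type*} [MeasurableSpace X] (μ : Measure X) [SigmaFinite μ]
    (pE pθ pα : X → ℝ)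
    (hpEm : Measurable pE) (hpE0 : ∀ x, 0 ≤ pE x) (hpE1 : ∫ x, pE x ∂μ = 1)
    (hpθm : Measurable pθ) (hpθ0 : ∀ x, 0 ≤ pθ x) (hpθ1 : ∫ x, pθ x ∂μ = 1)
    (hpαm : Measurable pα) (hpα0 : ∀ x, 0 ≤ pα x) (hpα1 : ∫ x, pα x ∂μ = 1)
    (ω : ℝ) (hω : ω ∈ Set.Ioo (0 : ℝ) 1)
    (D : X → ℝ) (hDm : Measurable D) (hD01 : ∀ x, D x ∈ Set.Ioo (0 : ℝ) 1)
    (hfin : discObj μ pE pθ pα ω (Dstar pE pθ pα ω) ≠ ⊥)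
    (heq : discObj μ pE pθ pα ω D = discObj μ pE pθ pα ω (Dstar pE pθ pα ω)) :
    ∀ᵐ x ∂μ, 0 < pE x + (ω * pθ x + (1 - ω) * pα x) →
      D x = Dstar pE pθ pα ω x :=
  optimal_discriminator_unique_general hpEm.aemeasurable (.of_forall hpE0)
    hpθm.aemeasurable (.of_forall hpθ0) hpαm.aemeasurable (.of_forall hpα0)
    (Set.Ioo_subset_Icc_self hω) hDm.aemeasurable (.of_forall hD01) hfin heq.ge

end
end

section
/- Let (X, 𝒜, μ) be a σ-finite measure space, let p_E : X → [0,∞) be a density (measurable with ∫ p_E dμ = 1), and let ω ∈ (0,1). For every pair of densities p_θ, p_α : X → [0,∞) satisfying ω·p_θ + (1−ω)·p_α = p_E μ-almost everywhere, the optimal value of the adversarial game equals −log 4; that is, with p_ω := ω·p_θ + (1−ω)·p_α and the convention 0·log 0 = 0, ∫ p_E·log(p_E/(p_E+p_ω)) dμ + ∫ p_ω·log(p_ω/(p_E+p_ω)) dμ = −log 4. In particular, distinct pairs (p_θ, p_α), such as (p_E, p_E) and any other mixture representation of p_E, all achieve the equilibrium value. -/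
/-!
STATEMENT 7 (multiplicity of equilibria, Lemma 2 of Triple-GAIL):
for any densities `p_θ, p_α` with `ω·p_θ + (1−ω)·p_α = p_E` μ-a.e., the
optimal value of the adversarial game equals `−log 4`:
`∫ p_E·log(p_E/(p_E+p_ω)) dμ + ∫ p_ω·log(p_ω/(p_E+p_ω)) dμ = −log 4`.
(The convention `0·log 0 = 0` holds definitionally, since `Real.log 0 = 0`
and `x / 0 = 0` in Lean.)
-/

open MeasureTheory

/-!
When the mixture density `pω` equals `pE`, the optimal discriminator `pE / (pE + pω)` is `1 / 2`
wherever `pE` is nonzero, and both integrands vanish elsewhere. Each integral is therefore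
`log (1 / 2)` times a total mass of `1`, whichever decomposition of `pE` the mixture comes from.
-/

theorem mul_log_div_const_mul (c a : ℝ) : a * Real.log (a / (c * a)) = -Real.log c * a := by
  obtain rfl | ha := eq_or_ne a 0
  · simp
  · rw [div_mul_cancel_right₀ ha, Real.log_inv, mul_comm]

theorem integral_mul_log_div_of_ae_eq_const_mul {X : Type*} [MeasurableSpace X] {μ : Measure X}
    {f g : X → ℝ} {c : ℝ} (hg : g =ᵐ[μ] fun x => c * f x) :
    ∫ x, f x * Real.log (f x / g x) ∂μ = -Real.log c * ∫ x, f x ∂μ := by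
  rw [← integral_const_mul]
  refine integral_congr_ae ?_
  filter_upwards [hg] with x hx
  rw [hx, mul_log_div_const_mul]

theorem equilibrium_value_of_mixture_general {X : Type*} [MeasurableSpace X] {μ : Measure X}
    {pE pω : X → ℝ} (hpE1 : ∫ x, pE x ∂μ = 1) (hpω : pω =ᵐ[μ] pE) :
    (∫ x, pE x * Real.log (pE x / (pE x + pω x)) ∂μ)
      + (∫ x, pω x * Real.log (pω x / (pE x + pω x)) ∂μ)
      = -Real.log 4 := by
  have hsumE : (fun x => pE x + pω x) =ᵐ[μ] fun x => 2 * pE x := by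
    filter_upwards [hpω] with x hx
    rw [hx, two_mul]
  have hsumω : (fun x => pE x + pω x) =ᵐ[μ] fun x => 2 * pω x := by
    filter_upwards [hpω] with x hx
    rw [hx, two_mul]
  have hpω1 : ∫ x, pω x ∂μ = 1 := (integral_congr_ae hpω).trans hpE1
  have hlog : Real.log 4 = Real.log 2 + Real.log 2 := by
    rw [← Real.log_mul two_ne_zero two_ne_zero]
    norm_num
  rw [integral_mul_log_div_of_ae_eq_const_mul hsumE,
    integral_mul_log_div_of_ae_eq_const_mul hsumω, hpE1, hpω1, hlog]
  ring

theorem equilibrium_value_of_mixture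
    {X : Type*} [MeasurableSpace X] (μ : Measure X) [SigmaFinite μ]
    (pE pθ pα : X → ℝ)
    (hpEm : Measurable pE) (hpE0 : ∀ x, 0 ≤ pE x) (hpE1 : ∫ x, pE x ∂μ = 1)
    (hpθm : Measurable pθ) (hpθ0 : ∀ x, 0 ≤ pθ x) (hpθ1 : ∫ x, pθ x ∂μ = 1)
    (hpαm : Measurable pα) (hpα0 : ∀ x, 0 ≤ pα x) (hpα1 : ∫ x, pα x ∂μ = 1)
    (ω : ℝ) (hω : ω ∈ Set.Ioo (0 : ℝ) 1)
    (hmix : (fun x => ω * pθ x + (1 - ω) * pα x) =ᵐ[μ] pE) :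
    (∫ x, pE x *
        Real.log (pE x / (pE x + (ω * pθ x + (1 - ω) * pα x))) ∂μ)
      + (∫ x, (ω * pθ x + (1 - ω) * pα x) *
          Real.log ((ω * pθ x + (1 - ω) * pα x) /
            (pE x + (ω * pθ x + (1 - ω) * pα x))) ∂μ)
      = -Real.log 4 :=
  equilibrium_value_of_mixture_general hpE1 hmix
end

section
/- Let (X, 𝒜, μ) be a σ-finite measure space, let p_E, p_θ, p_α : X → [0,∞) be densities (measurable with ∫ p dμ = 1), let ω ∈ (0,1) and λ_E > 0, and set p_ω := ω·p_θ + (1−ω)·p_α. Define (with convention 0·log 0 = 0) JSD(p,q) := (1/2)·∫ p·log(p/((p+q)/2)) dμ + (1/2)·∫ q·log(q/((p+q)/2)) dμ and KL(p‖q) := ∫ p·log(p/q) dμ. Then the regularized equilibrium objective U(p_θ, p_α) := 2·JSD(p_E, p_ω) + λ_E·KL(p_E ‖ p_α) satisfies U(p_θ, p_α) ≥ 0, and U(p_θ, p_α) = 0 if and only if p_θ = p_E μ-a.e. and p_α = p_E μ-a.e. -/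
/-!
STATEMENT 9 (Theorem 1 of Triple-GAIL, divergence form with the supervised
regularizer `R_E`): for densities `p_E, p_θ, p_α`, `ω ∈ (0,1)`, `λ_E > 0` and
`p_ω = ω·p_θ + (1−ω)·p_α`, the regularized equilibrium objective
`U(p_θ, p_α) = 2·JSD(p_E, p_ω) + λ_E·KL(p_E ‖ p_α)` satisfies `U ≥ 0`, with
equality iff `p_θ = p_E` μ-a.e. and `p_α = p_E` μ-a.e.

`KL(p‖q) = ∫ p·log(p/q) dμ` is taken in the extended reals with the
convention `0·log 0 = 0` (so `KL = +∞` where `q = 0 < p` on a non-null set):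
for densities (`∫ p dμ = ∫ q dμ = 1`) it is faithfully represented as the
lower integral of the nonnegative function `p·log(p/q) − p + q` (with value
`⊤` on `{q = 0, p ≠ 0}`), since `∫ (q − p) dμ = 0`.
-/

open MeasureTheory
open scoped ENNReal

noncomputable section

/-- Jensen–Shannon divergence between densities `p` and `q` w.r.t. `μ`. -/
def JSD {X : Type*} [MeasurableSpace X] (μ : Measure X) (p q : X → ℝ) : ℝ :=
  (1 / 2) * ∫ x, p x * Real.log (p x / ((p x + q x) / 2)) ∂μ
    + (1 / 2) * ∫ x, q x * Real.log (q x / ((p x + q x) / 2)) ∂μ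

/-- Kullback–Leibler divergence `KL(p‖q) = ∫ p·log(p/q) dμ` between densities,
valued in `[0,∞]`. -/
def KLD {X : Type*} [MeasurableSpace X] (μ : Measure X) (p q : X → ℝ) : ℝ≥0∞ :=
  ∫⁻ x, (if q x = 0 ∧ p x ≠ 0 then ⊤
    else ENNReal.ofReal (p x * Real.log (p x / q x) - p x + q x)) ∂μ

/-!
For `a ≥ 0` and `b > 0`, the quantity `a * log (a / b) - a + b = b * klFun (a / b)` is nonnegative
and vanishes only for `a = b`. It is the integrand of `KLD`, and it also computes `JSD`: on
comparing `a` and `b` with their midpoint, the linear corrections cancel. So both terms of the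
objective are nonnegative, and it vanishes iff both terms do. The `KLD` term then forces
`p_α = p_E`; the `JSD` term alone only forces the mixture `p_ω` to equal `p_E`, which for
`p_α = p_E` and `ω ≠ 0` means `p_θ = p_E`.
-/

section Pointwise

/-- The Bregman divergence of `x ↦ x * log x`, that is, the integrand of the generalized
Kullback–Leibler divergence. It has this meaning only if `b = 0` implies `a = 0`: for `b = 0` the
formula gives the junk value `-a`. -/
def entropyBregman (a b : ℝ) : ℝ := a * Real.log (a / b) - a + b

/-- The extension of `entropyBregman` by `⊤` to the points where `b = 0` and `a ≠ 0`; it is the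
integrand of `KLD`. -/
def klIntegrand (a b : ℝ) : ℝ≥0∞ :=
  if b = 0 ∧ a ≠ 0 then ⊤ else ENNReal.ofReal (entropyBregman a b)

/-- Twice the integrand of `JSD`. -/
def jsIntegrand (a b : ℝ) : ℝ :=
  a * Real.log (a / ((a + b) / 2)) + b * Real.log (b / ((a + b) / 2))

variable {a b : ℝ}

theorem entropyBregman_eq_mul_klFun (hb : b ≠ 0) :
    entropyBregman a b = b * InformationTheory.klFun (a / b) := by
  rw [entropyBregman, InformationTheory.klFun_apply]
  field_simp
  ring

theorem entropyBregman_nonneg (ha : 0 ≤ a) (hb : 0 ≤ b) (hab : b = 0 → a = 0) :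
    0 ≤ entropyBregman a b := by
  rcases hb.eq_or_lt with rfl | hb
  · simp [entropyBregman, hab rfl]
  · rw [entropyBregman_eq_mul_klFun hb.ne']
    exact mul_nonneg hb.le (InformationTheory.klFun_nonneg (by positivity))

theorem entropyBregman_eq_zero_iff (ha : 0 ≤ a) (hb : 0 ≤ b) (hab : b = 0 → a = 0) :
    entropyBregman a b = 0 ↔ a = b := by
  rcases hb.eq_or_lt with rfl | hb
  · simp [entropyBregman, hab rfl]
  · rw [entropyBregman_eq_mul_klFun hb.ne', mul_eq_zero_iff_left hb.ne',
      InformationTheory.klFun_eq_zero_iff (by positivity), div_eq_one_iff_eq hb.ne']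

theorem klIntegrand_eq_zero_iff (ha : 0 ≤ a) (hb : 0 ≤ b) : klIntegrand a b = 0 ↔ a = b := by
  rw [klIntegrand]
  split_ifs with h
  · have hne : a ≠ b := h.1 ▸ h.2
    simp [hne]
  · have hab : b = 0 → a = 0 := fun hb0 ↦ not_not.1 fun ha0 ↦ h ⟨hb0, ha0⟩
    rw [ENNReal.ofReal_eq_zero, (entropyBregman_nonneg ha hb hab).ge_iff_eq',
      entropyBregman_eq_zero_iff ha hb hab]

theorem measurable_klIntegrand : Measurable fun z : ℝ × ℝ ↦ klIntegrand z.1 z.2 := by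
  have hset : MeasurableSet {z : ℝ × ℝ | z.2 = 0 ∧ z.1 ≠ 0} :=
    (measurableSet_eq_fun measurable_snd measurable_const).inter
      (measurableSet_eq_fun measurable_fst measurable_const).compl
  unfold klIntegrand entropyBregman
  exact Measurable.ite hset measurable_const (by fun_prop)

theorem entropyBregman_midpoint_nonneg (ha : 0 ≤ a) (hb : 0 ≤ b) :
    0 ≤ entropyBregman a ((a + b) / 2) :=
  entropyBregman_nonneg ha (by positivity) fun _ ↦ by linarith

theorem entropyBregman_midpoint_eq_zero_iff (ha : 0 ≤ a) (hb : 0 ≤ b) :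
    entropyBregman a ((a + b) / 2) = 0 ↔ a = b := by
  rw [entropyBregman_eq_zero_iff ha (by positivity) fun _ ↦ by linarith]
  grind

theorem jsIntegrand_eq_add_entropyBregman (a b : ℝ) :
    jsIntegrand a b = entropyBregman a ((a + b) / 2) + entropyBregman b ((b + a) / 2) := by
  simp only [jsIntegrand, entropyBregman, add_comm b a]
  ring

theorem jsIntegrand_nonneg (ha : 0 ≤ a) (hb : 0 ≤ b) : 0 ≤ jsIntegrand a b := by
  rw [jsIntegrand_eq_add_entropyBregman]
  exact add_nonneg (entropyBregman_midpoint_nonneg ha hb) (entropyBregman_midpoint_nonneg hb ha)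

theorem jsIntegrand_eq_zero_iff (ha : 0 ≤ a) (hb : 0 ≤ b) : jsIntegrand a b = 0 ↔ a = b := by
  rw [jsIntegrand_eq_add_entropyBregman,
    add_eq_zero_iff_of_nonneg (entropyBregman_midpoint_nonneg ha hb)
      (entropyBregman_midpoint_nonneg hb ha),
    entropyBregman_midpoint_eq_zero_iff ha hb, entropyBregman_midpoint_eq_zero_iff hb ha,
    eq_comm (a := b), and_self]

theorem abs_mul_log_div_midpoint_le (ha : 0 ≤ a) (hb : 0 ≤ b) :
    |a * Real.log (a / ((a + b) / 2))| ≤ a + b := by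
  have lower : a - (a + b) / 2 ≤ a * Real.log (a / ((a + b) / 2)) := by
    have hnonneg := entropyBregman_midpoint_nonneg ha hb
    rw [entropyBregman] at hnonneg
    linarith
  have upper : a * Real.log (a / ((a + b) / 2)) ≤ a := by
    rcases ha.eq_or_lt with rfl | ha
    · simp
    · have ratio_le_two : a / ((a + b) / 2) ≤ 2 :=
        div_le_of_le_mul₀ (by positivity) zero_le_two (by linarith)
      have log_le_one : Real.log (a / ((a + b) / 2)) ≤ 1 :=
        (Real.log_le_sub_one_of_pos (by positivity)).trans (by linarith)
      exact mul_le_of_le_one_right ha.le log_le_one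
  exact abs_le.2 ⟨by linarith, by linarith⟩

end Pointwise

section Divergences

variable {X : Type*} [MeasurableSpace X] {μ : Measure X} {p q : X → ℝ}

theorem KLD_eq_lintegral_klIntegrand (μ : Measure X) (p q : X → ℝ) :
    KLD μ p q = ∫⁻ x, klIntegrand (p x) (q x) ∂μ := rfl

theorem KLD_eq_zero_iff (hp : AEMeasurable p μ) (hq : AEMeasurable q μ)
    (hp0 : 0 ≤ᵐ[μ] p) (hq0 : 0 ≤ᵐ[μ] q) : KLD μ p q = 0 ↔ p =ᵐ[μ] q := by
  have hmeas : AEMeasurable (fun x ↦ klIntegrand (p x) (q x)) μ :=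
    measurable_klIntegrand.comp_aemeasurable (hp.prodMk hq)
  rw [KLD_eq_lintegral_klIntegrand, lintegral_eq_zero_iff' hmeas]
  refine Filter.eventually_congr ?_
  filter_upwards [hp0, hq0] with x hpx hqx
  exact klIntegrand_eq_zero_iff hpx hqx

theorem integrable_mul_log_div_midpoint (hp : Integrable p μ) (hq : Integrable q μ)
    (hp0 : 0 ≤ᵐ[μ] p) (hq0 : 0 ≤ᵐ[μ] q) :
    Integrable (fun x ↦ p x * Real.log (p x / ((p x + q x) / 2))) μ := by
  have hpm := hp.aemeasurable
  have hqm := hq.aemeasurable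
  refine (hp.add hq).mono' (by fun_prop) ?_
  filter_upwards [hp0, hq0] with x hpx hqx
  exact abs_mul_log_div_midpoint_le hpx hqx

theorem integrable_mul_log_div_midpoint_right (hp : Integrable p μ) (hq : Integrable q μ)
    (hp0 : 0 ≤ᵐ[μ] p) (hq0 : 0 ≤ᵐ[μ] q) :
    Integrable (fun x ↦ q x * Real.log (q x / ((p x + q x) / 2))) μ := by
  simpa only [add_comm] using integrable_mul_log_div_midpoint hq hp hq0 hp0

theorem integrable_jsIntegrand (hp : Integrable p μ) (hq : Integrable q μ)
    (hp0 : 0 ≤ᵐ[μ] p) (hq0 : 0 ≤ᵐ[μ] q) :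
    Integrable (fun x ↦ jsIntegrand (p x) (q x)) μ :=
  (integrable_mul_log_div_midpoint hp hq hp0 hq0).add
    (integrable_mul_log_div_midpoint_right hp hq hp0 hq0)

theorem JSD_eq_integral_jsIntegrand (hp : Integrable p μ) (hq : Integrable q μ)
    (hp0 : 0 ≤ᵐ[μ] p) (hq0 : 0 ≤ᵐ[μ] q) :
    JSD μ p q = (1 / 2) * ∫ x, jsIntegrand (p x) (q x) ∂μ := by
  simp only [JSD, jsIntegrand]
  rw [← mul_add, integral_add (integrable_mul_log_div_midpoint hp hq hp0 hq0)
    (integrable_mul_log_div_midpoint_right hp hq hp0 hq0)]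

theorem ae_jsIntegrand_nonneg (hp0 : 0 ≤ᵐ[μ] p) (hq0 : 0 ≤ᵐ[μ] q) :
    0 ≤ᵐ[μ] fun x ↦ jsIntegrand (p x) (q x) := by
  filter_upwards [hp0, hq0] with x hpx hqx
  exact jsIntegrand_nonneg hpx hqx

theorem JSD_nonneg (hp : Integrable p μ) (hq : Integrable q μ)
    (hp0 : 0 ≤ᵐ[μ] p) (hq0 : 0 ≤ᵐ[μ] q) : 0 ≤ JSD μ p q := by
  rw [JSD_eq_integral_jsIntegrand hp hq hp0 hq0]
  exact mul_nonneg one_half_pos.le (integral_nonneg_of_ae (ae_jsIntegrand_nonneg hp0 hq0))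

theorem JSD_eq_zero_iff (hp : Integrable p μ) (hq : Integrable q μ)
    (hp0 : 0 ≤ᵐ[μ] p) (hq0 : 0 ≤ᵐ[μ] q) : JSD μ p q = 0 ↔ p =ᵐ[μ] q := by
  rw [JSD_eq_integral_jsIntegrand hp hq hp0 hq0, mul_eq_zero_iff_left one_half_pos.ne',
    integral_eq_zero_iff_of_nonneg_ae (ae_jsIntegrand_nonneg hp0 hq0)
      (integrable_jsIntegrand hp hq hp0 hq0)]
  refine Filter.eventually_congr ?_
  filter_upwards [hp0, hq0] with x hpx hqx
  exact jsIntegrand_eq_zero_iff hpx hqx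

end Divergences

theorem eventuallyEq_mixture_iff {X K : Type*} [Field K] {l : Filter X} {p q r : X → K} {ω : K}
    (hω : ω ≠ 0) (hqr : q =ᶠ[l] r) :
    r =ᶠ[l] (fun x ↦ ω * p x + (1 - ω) * q x) ↔ p =ᶠ[l] r := by
  refine Filter.eventually_congr ?_
  filter_upwards [hqr] with x hx
  have hmix : ω * p x + (1 - ω) * q x - r x = ω * (p x - r x) := by rw [hx]; ring
  rw [eq_comm, ← sub_eq_zero, hmix, mul_eq_zero_iff_left hω, sub_eq_zero]

theorem ereal_coe_mul_coe_ennreal_nonneg {c : ℝ} (hc : 0 ≤ c) (b : ℝ≥0∞) :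
    0 ≤ (c : EReal) * (b : EReal) :=
  mul_nonneg (EReal.coe_nonneg.2 hc) (EReal.coe_ennreal_nonneg b)

theorem ereal_coe_add_coe_mul_coe_ennreal_eq_zero_iff {a c : ℝ} {b : ℝ≥0∞}
    (ha : 0 ≤ a) (hc : 0 < c) :
    (a : EReal) + (c : EReal) * (b : EReal) = 0 ↔ a = 0 ∧ b = 0 := by
  rw [add_eq_zero_iff_of_nonneg (EReal.coe_nonneg.2 ha) (ereal_coe_mul_coe_ennreal_nonneg hc.le b),
    mul_eq_zero, EReal.coe_eq_zero, EReal.coe_eq_zero, or_iff_right hc.ne',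
    EReal.coe_ennreal_eq_zero]

theorem regularized_equilibrium_RE_general
    {X : Type*} [MeasurableSpace X] {μ : Measure X} {pE pθ pα : X → ℝ}
    (hpE : Integrable pE μ) (hpE0 : 0 ≤ᵐ[μ] pE)
    (hpθ : Integrable pθ μ) (hpθ0 : 0 ≤ᵐ[μ] pθ)
    (hpα : Integrable pα μ) (hpα0 : 0 ≤ᵐ[μ] pα)
    {ω : ℝ} (hω : ω ∈ Set.Ioc (0 : ℝ) 1) {lamE : ℝ} (hlamE : 0 < lamE) :
    0 ≤ ((2 * JSD μ pE (fun x => ω * pθ x + (1 - ω) * pα x) : ℝ) : EReal)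
        + ((lamE : ℝ) : EReal) * ((KLD μ pE pα : ℝ≥0∞) : EReal) ∧
    (((2 * JSD μ pE (fun x => ω * pθ x + (1 - ω) * pα x) : ℝ) : EReal)
        + ((lamE : ℝ) : EReal) * ((KLD μ pE pα : ℝ≥0∞) : EReal) = 0
      ↔ (pθ =ᵐ[μ] pE ∧ pα =ᵐ[μ] pE)) := by
  have hmix : Integrable (fun x ↦ ω * pθ x + (1 - ω) * pα x) μ :=
    (hpθ.const_mul ω).add (hpα.const_mul (1 - ω))
  have hmix0 : 0 ≤ᵐ[μ] fun x ↦ ω * pθ x + (1 - ω) * pα x := by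
    filter_upwards [hpθ0, hpα0] with x hθ hα
    exact add_nonneg (mul_nonneg hω.1.le hθ) (mul_nonneg (sub_nonneg.2 hω.2) hα)
  have hJSD := mul_nonneg zero_le_two (JSD_nonneg hpE hmix hpE0 hmix0)
  refine ⟨add_nonneg (EReal.coe_nonneg.2 hJSD) (ereal_coe_mul_coe_ennreal_nonneg hlamE.le _), ?_⟩
  rw [ereal_coe_add_coe_mul_coe_ennreal_eq_zero_iff hJSD hlamE, mul_eq_zero_iff_left two_ne_zero,
    JSD_eq_zero_iff hpE hmix hpE0 hmix0,
    KLD_eq_zero_iff hpE.aemeasurable hpα.aemeasurable hpE0 hpα0,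
    Filter.eventuallyEq_comm (f := pE) (g := pα)]
  exact and_congr_left (eventuallyEq_mixture_iff hω.1.ne')

theorem regularized_equilibrium_RE
    {X : Type*} [MeasurableSpace X] (μ : Measure X) [SigmaFinite μ]
    (pE pθ pα : X → ℝ)
    (hpEm : Measurable pE) (hpE0 : ∀ x, 0 ≤ pE x) (hpE1 : ∫ x, pE x ∂μ = 1)
    (hpθm : Measurable pθ) (hpθ0 : ∀ x, 0 ≤ pθ x) (hpθ1 : ∫ x, pθ x ∂μ = 1)
    (hpαm : Measurable pα) (hpα0 : ∀ x, 0 ≤ pα x) (hpα1 : ∫ x, pα x ∂μ = 1)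
    (ω : ℝ) (hω : ω ∈ Set.Ioo (0 : ℝ) 1)
    (lamE : ℝ) (hlamE : 0 < lamE) :
    0 ≤ ((2 * JSD μ pE (fun x => ω * pθ x + (1 - ω) * pα x) : ℝ) : EReal)
        + ((lamE : ℝ) : EReal) * ((KLD μ pE pα : ℝ≥0∞) : EReal) ∧
    (((2 * JSD μ pE (fun x => ω * pθ x + (1 - ω) * pα x) : ℝ) : EReal)
        + ((lamE : ℝ) : EReal) * ((KLD μ pE pα : ℝ≥0∞) : EReal) = 0
      ↔ (pθ =ᵐ[μ] pE ∧ pα =ᵐ[μ] pE)) := by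
  exact regularized_equilibrium_RE_general
    (.of_integral_ne_zero (hpE1 ▸ one_ne_zero)) (.of_forall hpE0)
    (.of_integral_ne_zero (hpθ1 ▸ one_ne_zero)) (.of_forall hpθ0)
    (.of_integral_ne_zero (hpα1 ▸ one_ne_zero)) (.of_forall hpα0)
    (Set.Ioo_subset_Ioc_self hω) hlamE

end
end
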